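/- Let X and X' be independent and identically distributed random vectors in ℝ^d with E‖X‖ < ∞. Then X is equal in distribution to −X if and only if E‖X + X'‖ = E‖X − X'‖ (here ‖·‖ is the Euclidean norm). Consequently, the hypothesis of diagonal symmetry H₀: X =_D −X is equivalent to the hypothesis H₀': E[‖X + X'‖ − ‖X − X'‖] = 0. -/

import Mathlib

open MeasureTheory ProbabilityTheory

/-!
Let `γ` be the standard Gaussian measure. Since `∫ exp (i⟪w, v⟫) dγ(v) = exp (-‖w‖² / 2)`,
rescaling `u` in `∫ (1 - exp (-u² ‖Y‖² / 2)) / u² du` gives, for any integrable random vector `Y`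
with characteristic function `ψ` and a constant `c` independent of `Y`,
`c * E‖Y‖ = ∫ (1 - ∫ Re ψ(u • v) dγ(v)) / u² du`.
If `φ` is the characteristic function of `X`, then by independence `X + X'` has characteristic
function `φ²` and `X - X'` has `|φ|²`, and `|φ|² - Re φ² = 2 (Im φ)²`. Hence
`c * (E‖X + X'‖ - E‖X - X'‖) = ∫ (∫ 2 (Im φ(u • v))² dγ(v)) / u² du`,
which vanishes only if `Im φ = 0`, that is, only if `X` and `-X` have the same law.
-/

section LevyKernel

/-- The integrand `(1 - exp (-(r u)² / 2)) / u²` in the Lévy–Khintchine type representation of `|r|`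
as a superposition of Gaussians; at `u = 0` it takes the junk value `0`. -/
noncomputable def levyKernel (r u : ℝ) : ℝ := (1 - Real.exp (-(r * u) ^ 2 / 2)) / u ^ 2

@[fun_prop]
lemma measurable_levyKernel : Measurable (Function.uncurry levyKernel) := by
  unfold levyKernel Function.uncurry
  fun_prop

lemma exp_neg_sq_div_two_le_one (x : ℝ) : Real.exp (-x ^ 2 / 2) ≤ 1 :=
  Real.exp_le_one_iff.2 (by linarith [sq_nonneg x])

lemma levyKernel_nonneg (r u : ℝ) : 0 ≤ levyKernel r u :=
  div_nonneg (sub_nonneg.2 (exp_neg_sq_div_two_le_one (r * u))) (sq_nonneg u)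

lemma levyKernel_eq_sq_mul_levyKernel_one (r u : ℝ) :
    levyKernel r u = r ^ 2 * levyKernel 1 (r * u) := by
  rcases eq_or_ne r 0 with rfl | hr
  · simp [levyKernel]
  rcases eq_or_ne u 0 with rfl | hu
  · simp [levyKernel]
  unfold levyKernel
  field_simp

lemma levyKernel_one_le (u : ℝ) : levyKernel 1 u ≤ 2 * (1 + u ^ 2)⁻¹ := by
  rcases eq_or_ne u 0 with rfl | hu
  · simp [levyKernel]
  have hexp_pos := Real.exp_pos (-u ^ 2 / 2)
  have hexp_ge := Real.add_one_le_exp (-u ^ 2 / 2)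
  have hu_sq : 0 < u ^ 2 := by positivity
  rw [levyKernel, one_mul, ← div_eq_mul_inv, div_le_div_iff₀ hu_sq (by positivity)]
  nlinarith [mul_pos hexp_pos hu_sq]

lemma integrable_levyKernel (r : ℝ) : Integrable (levyKernel r) := by
  have hone : Integrable (levyKernel 1) :=
    (integrable_inv_one_add_sq.const_mul 2).mono' (by fun_prop) <| .of_forall fun u => by
      simpa only [Real.norm_of_nonneg (levyKernel_nonneg 1 u)] using levyKernel_one_le u
  rw [funext (levyKernel_eq_sq_mul_levyKernel_one r)]
  rcases eq_or_ne r 0 with rfl | hr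
  · simp
  exact (hone.comp_mul_left' hr).const_mul _

/-- The total mass of `levyKernel 1`, the normalizing constant of the representation of `|r|`. -/
noncomputable def levyMass : ℝ := ∫ u, levyKernel 1 u

lemma integral_levyKernel (r : ℝ) : ∫ u, levyKernel r u = |r| * levyMass := by
  rw [levyMass, funext (levyKernel_eq_sq_mul_levyKernel_one r), integral_const_mul,
    Measure.integral_comp_mul_left (levyKernel 1), smul_eq_mul, abs_inv, ← sq_abs r]
  rcases eq_or_ne r 0 with rfl | hr
  · simp
  field_simp

lemma integrable_levyKernel_prod {α : Type*} [MeasurableSpace α] {P : Measure α} [SFinite P]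
    {R : α → ℝ} (hR : Integrable R P) :
    Integrable (fun p : α × ℝ => levyKernel (R p.1) p.2) (P.prod volume) := by
  have hmeas : AEStronglyMeasurable (fun p : α × ℝ => levyKernel (R p.1) p.2) (P.prod volume) :=
    (measurable_levyKernel.comp_aemeasurable
      (hR.aemeasurable.comp_fst.prodMk measurable_snd.aemeasurable)).aestronglyMeasurable
  refine (integrable_prod_iff hmeas).2 ⟨.of_forall fun a => integrable_levyKernel (R a), ?_⟩
  simp only [Real.norm_of_nonneg (levyKernel_nonneg _ _), integral_levyKernel]
  exact hR.abs.mul_const _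

end LevyKernel

lemma identDistrib_add_sub_of_map_eq_map_neg {G Ω : Type*} [MeasurableSpace G] [AddGroup G]
    [MeasurableAdd₂ G] [MeasurableNeg G] [MeasurableSpace Ω] {μ : Measure Ω} [IsFiniteMeasure μ]
    {X X' : Ω → G} (hident : IdentDistrib X X' μ μ) (hindep : IndepFun X X' μ)
    (hsymm : μ.map X = μ.map fun ω => -X ω) :
    IdentDistrib (fun ω => X ω + X' ω) (fun ω => X ω - X' ω) μ μ := by
  have hX := hident.aemeasurable_fst
  have hX'_neg : IdentDistrib X' (fun ω => -X' ω) μ μ :=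
    hident.symm.trans (.trans ⟨hX, hX.fun_neg, hsymm⟩ (hident.comp measurable_neg))
  have hpair : IdentDistrib (fun ω => (X ω, X' ω)) (fun ω => (X ω, -X' ω)) μ μ :=
    (IdentDistrib.refl hX).prodMk hX'_neg hindep (hindep.comp measurable_id measurable_neg)
  simpa only [Function.comp_def, sub_eq_add_neg] using
    hpair.comp (u := fun p : G × G => p.1 + p.2) (by fun_prop)

section CharFun

variable {V : Type*} [NormedAddCommGroup V] [InnerProductSpace ℝ V] [MeasurableSpace V]
  [BorelSpace V] {Ω : Type*} [MeasurableSpace Ω] {P : Measure Ω} {X Y : Ω → V}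

lemma charFun_map_neg (hX : AEMeasurable X P) (t : V) :
    charFun (P.map fun ω => -X ω) t = starRingEnd ℂ (charFun (P.map X) t) := by
  rw [← charFun_neg, ← neg_one_smul ℝ t, ← charFun_map_smul_comp hX]
  simp only [neg_smul, one_smul]

variable [SecondCountableTopology V]

lemma integrable_charFun_smul (μ ν : Measure V) [IsFiniteMeasure μ] [IsFiniteMeasure ν] (u : ℝ) :
    Integrable (fun v => charFun μ (u • v)) ν :=
  .of_bound (by fun_prop) _ <| .of_forall fun v => norm_charFun_le (u • v)

lemma integral_charFun_comm (μ ν : Measure V) [IsFiniteMeasure μ] [IsFiniteMeasure ν] :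
    ∫ t, charFun μ t ∂ν = ∫ x, charFun ν x ∂μ := by
  have hint : Integrable
      (Function.uncurry fun t x : V => Complex.exp ((inner ℝ x t : ℝ) * Complex.I)) (ν.prod μ) :=
    (integrable_const (1 : ℝ)).mono' (Measurable.aestronglyMeasurable (by fun_prop))
      (.of_forall fun p => (Complex.norm_exp_ofReal_mul_I _).le)
  simpa only [charFun_apply, real_inner_comm] using integral_integral_swap hint

lemma map_eq_map_neg_iff_charFun_im_eq_zero [CompleteSpace V] [IsFiniteMeasure P]
    (hX : AEMeasurable X P) :
    P.map X = P.map (fun ω => -X ω) ↔ ∀ t, (charFun (P.map X) t).im = 0 := by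
  simp only [← Complex.conj_eq_iff_im, ← charFun_map_neg hX]
  exact ⟨fun h t => by rw [← h], fun h => Measure.ext_of_charFun (funext fun t => (h t).symm)⟩

lemma charFun_map_sub_re_sub_charFun_map_add_re [IsFiniteMeasure P] (hXY : IdentDistrib X Y P P)
    (hindep : IndepFun X Y P) (t : V) :
    (charFun (P.map fun ω => X ω - Y ω) t).re - (charFun (P.map fun ω => X ω + Y ω) t).re =
      2 * (charFun (P.map X) t).im ^ 2 := by
  have hX := hXY.aemeasurable_fst
  have hY := hXY.aemeasurable_snd
  have hindep_neg : IndepFun X (fun ω => -Y ω) P := hindep.comp measurable_id measurable_neg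
  simp only [sub_eq_add_neg (X _)]
  rw [hindep_neg.charFun_map_fun_add_eq_mul hX hY.fun_neg, hindep.charFun_map_fun_add_eq_mul hX hY,
    Pi.mul_apply, Pi.mul_apply, charFun_map_neg hY, ← hXY.map_eq, Complex.mul_re, Complex.mul_re,
    Complex.conj_re, Complex.conj_im]
  ring

end CharFun

section NormRepresentation

variable {V : Type*} [NormedAddCommGroup V] [InnerProductSpace ℝ V] [FiniteDimensional ℝ V]
  [MeasurableSpace V] [BorelSpace V]

instance isOpenPosMeasure_stdGaussian : (stdGaussian V).IsOpenPosMeasure := by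
  have : (gaussianReal 0 1).IsOpenPosMeasure :=
    (gaussianReal_absolutelyContinuous' 0 one_ne_zero).isOpenPosMeasure
  let e := (stdOrthonormalBasis ℝ V).toBasis.equivFun.symm
  have he : (fun x : Fin (Module.finrank ℝ V) → ℝ => ∑ i, x i • stdOrthonormalBasis ℝ V i) = e := by
    ext x
    simp only [e, Module.Basis.equivFun_symm_apply, OrthonormalBasis.coe_toBasis]
  rw [stdGaussian, he]
  exact e.toLinearMap.continuous_of_finiteDimensional.isOpenPosMeasure_map e.surjective

/-- The Gaussian average at scale `u` of `1 - Re (charFun ρ)`, divided by `u²`. Its integral over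
`u` is a constant multiple of the first absolute moment of `ρ`. -/
noncomputable def gaussianCharFunDefect (ρ : Measure V) (u : ℝ) : ℝ :=
  (1 - ∫ v, (charFun ρ (u • v)).re ∂stdGaussian V) / u ^ 2

lemma integral_charFun_smul_re_stdGaussian (ρ : Measure V) [IsFiniteMeasure ρ] (u : ℝ) :
    ∫ v, (charFun ρ (u • v)).re ∂stdGaussian V = ∫ x, Real.exp (-(‖x‖ * u) ^ 2 / 2) ∂ρ := by
  have hcomplex : ∫ v, charFun ρ (u • v) ∂stdGaussian V =
      ∫ x, ((Real.exp (-(‖x‖ * u) ^ 2 / 2) : ℝ) : ℂ) ∂ρ := by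
    simp only [← charFun_map_smul]
    rw [integral_charFun_comm, integral_map (by fun_prop) (by fun_prop)]
    simp [charFun_stdGaussian, norm_smul, ← Complex.ofReal_pow, mul_pow, mul_comm]
  have hre : ∫ v, (charFun ρ (u • v)).re ∂stdGaussian V =
      (∫ v, charFun ρ (u • v) ∂stdGaussian V).re :=
    integral_re (integrable_charFun_smul ρ _ u)
  rw [hre, hcomplex, integral_complex_ofReal, Complex.ofReal_re]

variable {Ω : Type*} [MeasurableSpace Ω] {P : Measure Ω} [IsProbabilityMeasure P] {Y : Ω → V}

lemma gaussianCharFunDefect_map_eq_integral_levyKernel (hY : AEMeasurable Y P) (u : ℝ) :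
    gaussianCharFunDefect (P.map Y) u = ∫ ω, levyKernel ‖Y ω‖ u ∂P := by
  have hint : Integrable (fun ω => Real.exp (-(‖Y ω‖ * u) ^ 2 / 2)) P :=
    .of_bound (AEMeasurable.aestronglyMeasurable (by fun_prop)) 1 <| .of_forall fun ω => by
      rw [Real.norm_of_nonneg (Real.exp_pos _).le]
      exact exp_neg_sq_div_two_le_one (‖Y ω‖ * u)
  simp only [gaussianCharFunDefect, levyKernel, integral_charFun_smul_re_stdGaussian]
  rw [integral_map hY (by fun_prop), integral_div, integral_sub (integrable_const 1) hint,
    integral_const, probReal_univ, one_smul]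

lemma integrable_gaussianCharFunDefect_map (hY : Integrable Y P) :
    Integrable (gaussianCharFunDefect (P.map Y)) := by
  rw [funext (gaussianCharFunDefect_map_eq_integral_levyKernel hY.aemeasurable)]
  exact (integrable_levyKernel_prod hY.norm).integral_prod_right

lemma integral_gaussianCharFunDefect_map (hY : Integrable Y P) :
    ∫ u, gaussianCharFunDefect (P.map Y) u = (∫ ω, ‖Y ω‖ ∂P) * levyMass := by
  simp only [gaussianCharFunDefect_map_eq_integral_levyKernel hY.aemeasurable]
  rw [← integral_integral_swap (integrable_levyKernel_prod hY.norm)]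
  simp only [integral_levyKernel, abs_norm]
  exact integral_mul_const _ _

end NormRepresentation

section EnergyGap

variable {V : Type*} [NormedAddCommGroup V] [InnerProductSpace ℝ V] [FiniteDimensional ℝ V]
  [MeasurableSpace V] [BorelSpace V]

/-- The density in `u` of the energy gap `E‖X + X'‖ - E‖X - X'‖` of independent `X`, `X'` of common
law `ρ`, in the scale parameter `u` of `gaussianCharFunDefect`. -/
noncomputable def energyGapDensity (ρ : Measure V) (u : ℝ) : ℝ :=
  (∫ v, 2 * (charFun ρ (u • v)).im ^ 2 ∂stdGaussian V) / u ^ 2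

lemma charFun_im_eq_zero_of_integral_energyGapDensity_eq_zero {ρ : Measure V}
    [IsFiniteMeasure ρ] (hint : Integrable (energyGapDensity ρ))
    (hzero : ∫ u, energyGapDensity ρ u = 0) (t : V) : (charFun ρ t).im = 0 := by
  have hnonneg (u : ℝ) : 0 ≤ energyGapDensity ρ u := by unfold energyGapDensity; positivity
  have hae_zero : ∀ᵐ u, energyGapDensity ρ u = 0 :=
    (integral_eq_zero_iff_of_nonneg hnonneg hint).1 hzero
  obtain ⟨u, hgap, hu⟩ := (hae_zero.and (Measure.ae_ne volume (0 : ℝ))).exists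
  have hintegral : ∫ v, 2 * (charFun ρ (u • v)).im ^ 2 ∂stdGaussian V = 0 :=
    (div_eq_zero_iff.1 hgap).resolve_right (pow_ne_zero 2 hu)
  have hcont : Continuous fun v : V => 2 * (charFun ρ (u • v)).im ^ 2 := by fun_prop
  have hbound (v : V) : ‖2 * (charFun ρ (u • v)).im ^ 2‖ ≤ 2 * ρ.real Set.univ ^ 2 := by
    rw [norm_mul, norm_pow, Real.norm_two, Real.norm_eq_abs]
    gcongr
    exact (Complex.abs_im_le_norm _).trans (norm_charFun_le _)
  have hintegrable : Integrable (fun v => 2 * (charFun ρ (u • v)).im ^ 2) (stdGaussian V) :=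
    .of_bound hcont.aestronglyMeasurable _ (.of_forall hbound)
  by_contra ht
  refine (integral_pos_of_integrable_nonneg_nonzero (x := u⁻¹ • t) hcont hintegrable
    (fun v => by positivity) ?_).ne' hintegral
  simpa [smul_inv_smul₀ hu] using ht

variable {Ω : Type*} [MeasurableSpace Ω] {μ : Measure Ω} {X X' : Ω → V}

lemma energyGapDensity_eq_gaussianCharFunDefect_sub [IsFiniteMeasure μ]
    (hident : IdentDistrib X X' μ μ) (hindep : IndepFun X X' μ) :
    energyGapDensity (μ.map X) = gaussianCharFunDefect (μ.map fun ω => X ω + X' ω) -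
      gaussianCharFunDefect (μ.map fun ω => X ω - X' ω) := by
  ext u
  have hre (ρ : Measure V) [IsFiniteMeasure ρ] :
      Integrable (fun v => (charFun ρ (u • v)).re) (stdGaussian V) :=
    (integrable_charFun_smul ρ _ u).re
  simp only [energyGapDensity, gaussianCharFunDefect, Pi.sub_apply,
    ← charFun_map_sub_re_sub_charFun_map_add_re hident hindep]
  rw [integral_sub (hre _) (hre _)]
  ring

variable [IsProbabilityMeasure μ]

lemma integrable_energyGapDensity (hident : IdentDistrib X X' μ μ) (hindep : IndepFun X X' μ)
    (hint : Integrable X μ) : Integrable (energyGapDensity (μ.map X)) := by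
  have hint' : Integrable X' μ := hident.integrable_snd hint
  rw [energyGapDensity_eq_gaussianCharFunDefect_sub hident hindep]
  exact (integrable_gaussianCharFunDefect_map (hint.add hint')).sub
    (integrable_gaussianCharFunDefect_map (hint.sub hint'))

lemma integral_energyGapDensity (hident : IdentDistrib X X' μ μ) (hindep : IndepFun X X' μ)
    (hint : Integrable X μ) :
    ∫ u, energyGapDensity (μ.map X) u =
      (∫ ω, ‖X ω + X' ω‖ ∂μ - ∫ ω, ‖X ω - X' ω‖ ∂μ) * levyMass := by
  have hadd : Integrable (fun ω => X ω + X' ω) μ := hint.add (hident.integrable_snd hint)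
  have hsub : Integrable (fun ω => X ω - X' ω) μ := hint.sub (hident.integrable_snd hint)
  rw [energyGapDensity_eq_gaussianCharFunDefect_sub hident hindep,
    integral_sub' (integrable_gaussianCharFunDefect_map hadd)
      (integrable_gaussianCharFunDefect_map hsub),
    integral_gaussianCharFunDefect_map hadd, integral_gaussianCharFunDefect_map hsub, sub_mul]

end EnergyGap

theorem energy_characterization_of_diagonal_symmetry_general
    {V : Type*} [NormedAddCommGroup V] [InnerProductSpace ℝ V] [FiniteDimensional ℝ V]
    [MeasurableSpace V] [BorelSpace V]
    {Ω : Type*} [MeasurableSpace Ω] {μ : Measure Ω} [IsProbabilityMeasure μ] {X X' : Ω → V}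
    (hident : IdentDistrib X X' μ μ) (hindep : IndepFun X X' μ) (hint : Integrable X μ) :
    μ.map X = μ.map (fun ω => -X ω) ↔
      ∫ ω, ‖X ω + X' ω‖ ∂μ = ∫ ω, ‖X ω - X' ω‖ ∂μ := by
  refine ⟨fun hsymm =>
    (identDistrib_add_sub_of_map_eq_map_neg hident hindep hsymm).norm.integral_eq, fun h => ?_⟩
  rw [map_eq_map_neg_iff_charFun_im_eq_zero hident.aemeasurable_fst]
  have hgap : ∫ u, energyGapDensity (μ.map X) u = 0 := by
    rw [integral_energyGapDensity hident hindep hint, h, sub_self, zero_mul]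
  exact charFun_im_eq_zero_of_integral_energyGapDensity_eq_zero
    (integrable_energyGapDensity hident hindep hint) hgap

/-- If `X` and `X'` are i.i.d. random vectors in `ℝ^d` with `E‖X‖ < ∞`,
then `X` is equal in distribution to `-X` if and only if
`E‖X + X'‖ = E‖X - X'‖`.  Hence the diagonal symmetry hypothesis
`H₀ : X =_D -X` is equivalent to `H₀' : E[‖X + X'‖ - ‖X - X'‖] = 0`. -/
theorem energy_characterization_of_diagonal_symmetry
    {Ω : Type*} [MeasurableSpace Ω] (μ : Measure Ω) [IsProbabilityMeasure μ]
    (d : ℕ) (X X' : Ω → EuclideanSpace ℝ (Fin d))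
    (hX : Measurable X) (hX' : Measurable X')
    (hident : Measure.map X' μ = Measure.map X μ)
    (hindep : IndepFun X X' μ)
    (hint : Integrable (fun ω => ‖X ω‖) μ) :
    Measure.map X μ = Measure.map (fun ω => -X ω) μ ↔
      ∫ ω, ‖X ω + X' ω‖ ∂μ = ∫ ω, ‖X ω - X' ω‖ ∂μ := by
  rw [integrable_norm_iff hX.aestronglyMeasurable] at hint
  exact energy_characterization_of_diagonal_symmetry_general
    ⟨hX.aemeasurable, hX'.aemeasurable, hident.symm⟩ hindep hint
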